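/- Let p ≥ 1, 0 < β < 1, and let I and J be independent indices drawn uniformly from {1, …, p}. Define the random p × p matrix D = Id + β e_I (e_J − e_I)ᵀ. Then for every x ∈ ℝᵖ, (1 − 2β(1−β)/p) ‖x‖² ≤ xᵀ E[Dᵀ D] x ≤ ‖x‖²; in particular E[ ‖D x‖² ] ≤ ‖x‖² for every x ∈ ℝᵖ. -/

import Mathlib

/-!
Write `D = Id + β u vᵀ` with `u = e_I` and `v = e_J - e_I`. As `u` is a unit vector,
`Dᵀ D = Id + β (u vᵀ + v uᵀ) + β² v vᵀ`. The outer products, averaged over all index pairs,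
produce only multiples of `Id` and `𝟙 𝟙ᵀ`, and
`E[Dᵀ D] = (1 - 2β(1 - β)/p) Id + (2β(1 - β)/p²) 𝟙 𝟙ᵀ`.
The lower bound drops the positive semidefinite second term; the upper bound is the
Cauchy–Schwarz inequality `(∑ xᵢ)² ≤ p ‖x‖²`.
-/

open Matrix BigOperators

variable {ι κ m n R K : Type*}

section CommSemiring

variable [CommSemiring R]

lemma dotProduct_smul_sum_transpose_mul_self_mulVec [Fintype κ] [Fintype m] [Fintype n] (c : R)
    (A : κ → Matrix m n R) (x : n → R) :
    x ⬝ᵥ (c • ∑ k, (A k)ᵀ * A k) *ᵥ x = c * ∑ k, ∑ i, (A k *ᵥ x) i ^ 2 := by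
  have gram (k : κ) : x ⬝ᵥ ((A k)ᵀ * A k) *ᵥ x = ∑ i, (A k *ᵥ x) i ^ 2 := by
    rw [← mulVec_mulVec, dotProduct_mulVec, vecMul_transpose]
    simp only [dotProduct, sq]
  simp only [smul_mulVec, dotProduct_smul, sum_mulVec, dotProduct_sum, gram, smul_eq_mul]

lemma dotProduct_smul_one_add_smul_vecMulVec_one_mulVec [Fintype ι] [DecidableEq ι] (a b : R)
    (x : ι → R) :
    x ⬝ᵥ (a • (1 : Matrix ι ι R) + b • vecMulVec 1 1) *ᵥ x =
      a * ∑ i, x i ^ 2 + b * (∑ i, x i) ^ 2 := by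
  simp only [add_mulVec, smul_mulVec, one_mulVec, vecMulVec_mulVec, dotProduct_add,
    dotProduct_smul, dotProduct_one, one_dotProduct, smul_eq_mul, op_smul_eq_smul]
  simp only [dotProduct, sq]

lemma transpose_mul_self_one_add_smul_vecMulVec [Fintype ι] [DecidableEq ι] (β : R)
    (u v : ι → R) :
    (1 + β • vecMulVec u v)ᵀ * (1 + β • vecMulVec u v) =
      1 + β • (vecMulVec u v + vecMulVec v u) + (β ^ 2 * (u ⬝ᵥ u)) • vecMulVec v v := by
  simp only [transpose_add, transpose_one, transpose_smul, transpose_vecMulVec, add_mul, mul_add,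
    one_mul, mul_one, smul_mul_assoc, mul_smul_comm, vecMulVec_mul_vecMulVec, vecMulVec_smul]
  module

lemma sum_prod_single_one_eq_vecMulVec_one [Fintype m] [Fintype n] [DecidableEq m]
    [DecidableEq n] :
    ∑ q : m × n, single q.1 q.2 (1 : R) = vecMulVec 1 1 := by
  rw [Fintype.sum_prod_type, matrix_eq_sum_single (vecMulVec 1 1)]
  simp only [vecMulVec_apply, Pi.one_apply, mul_one]

end CommSemiring

section CommRing

variable [CommRing R] [Fintype ι] [DecidableEq ι]

/-- The update matrix `D = Id + β e_i (e_j - e_i)ᵀ` of one step of pull-gossip with mixing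
parameter `β`, in which processor `i` pulls the value of processor `j`. -/
def pullGossip (β : R) (i j : ι) : Matrix ι ι R :=
  1 + β • vecMulVec (Pi.single i 1) (Pi.single j 1 - Pi.single i 1)

lemma transpose_mul_self_pullGossip (β : R) (i j : ι) :
    (pullGossip β i j)ᵀ * pullGossip β i j =
      1 - (2 * β - β ^ 2) • single i i 1 + β ^ 2 • single j j 1 +
        (β * (1 - β)) • (single i j 1 + single j i 1) := by
  have unit_single : Pi.single i (1 : R) ⬝ᵥ Pi.single i 1 = 1 := by
    rw [single_one_dotProduct, Pi.single_eq_same]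
  rw [pullGossip, transpose_mul_self_one_add_smul_vecMulVec, unit_single]
  simp only [sub_vecMulVec, vecMulVec_sub, ← single_eq_single_vecMulVec_single]
  module

lemma sum_transpose_mul_self_pullGossip (β : R) :
    ∑ q : ι × ι, (pullGossip β q.1 q.2)ᵀ * pullGossip β q.1 q.2 =
      ((Fintype.card ι : R) ^ 2 - 2 * β * (1 - β) * Fintype.card ι) • (1 : Matrix ι ι R) +
        (2 * β * (1 - β)) • vecMulVec 1 1 := by
  have sum_one : ∑ _q : ι × ι, (1 : Matrix ι ι R) = (Fintype.card ι : R) ^ 2 • 1 := by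
    rw [Finset.sum_const, Finset.card_univ, Fintype.card_prod, ← Nat.cast_smul_eq_nsmul R,
      Nat.cast_mul, sq]
  have sum_fst : ∑ q : ι × ι, single q.1 q.1 (1 : R) = (Fintype.card ι : R) • 1 := by
    rw [Fintype.sum_prod_type_right]
    simp only [sum_single_one, Finset.sum_const, Finset.card_univ, Nat.cast_smul_eq_nsmul]
  have sum_snd : ∑ q : ι × ι, single q.2 q.2 (1 : R) = (Fintype.card ι : R) • 1 := by
    rw [← sum_fst, ← (Equiv.prodComm ι ι).sum_comp]
    rfl
  have sum_swap : ∑ q : ι × ι, single q.2 q.1 (1 : R) = vecMulVec 1 1 := by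
    rw [← sum_prod_single_one_eq_vecMulVec_one, ← (Equiv.prodComm ι ι).sum_comp]
    rfl
  simp only [transpose_mul_self_pullGossip, Finset.sum_add_distrib, Finset.sum_sub_distrib,
    ← Finset.smul_sum, sum_one, sum_fst, sum_snd, sum_prod_single_one_eq_vecMulVec_one, sum_swap]
  module

end CommRing

lemma average_transpose_mul_self_pullGossip [Field K] [Fintype ι] [DecidableEq ι]
    (hcard : (Fintype.card ι : K) ≠ 0) (β : K) :
    ((Fintype.card ι : K) ^ 2)⁻¹ •
        ∑ q : ι × ι, (pullGossip β q.1 q.2)ᵀ * pullGossip β q.1 q.2 =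
      (1 - 2 * β * (1 - β) / Fintype.card ι) • (1 : Matrix ι ι K) +
        (2 * β * (1 - β) / (Fintype.card ι : K) ^ 2) • vecMulVec 1 1 := by
  rw [sum_transpose_mul_self_pullGossip, smul_add, smul_smul, smul_smul]
  congr 2 <;> field_simp

section OrderedField

variable [Field K] [LinearOrder K] [IsStrictOrderedRing K] [Fintype ι]

lemma div_card_sq_mul_sq_sum_le {c : K} (hc : 0 ≤ c) (x : ι → K) :
    c / (Fintype.card ι : K) ^ 2 * (∑ i, x i) ^ 2 ≤ c / Fintype.card ι * ∑ i, x i ^ 2 := by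
  rcases isEmpty_or_nonempty ι with _ | _
  · simp
  calc c / (Fintype.card ι : K) ^ 2 * (∑ i, x i) ^ 2
      ≤ c / (Fintype.card ι : K) ^ 2 * (Fintype.card ι * ∑ i, x i ^ 2) := by
        gcongr
        exact sq_sum_le_card_mul_sum_sq
    _ = c / Fintype.card ι * ∑ i, x i ^ 2 := by field_simp

theorem stmt_7_general [DecidableEq ι] [Nonempty ι] {β : K} (hβ0 : 0 ≤ β) (hβ1 : β ≤ 1) :
    (∀ x : ι → K,
      (1 - 2 * β * (1 - β) / Fintype.card ι) * (∑ i, x i ^ 2) ≤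
          x ⬝ᵥ (((Fintype.card ι : K) ^ 2)⁻¹ •
            ∑ q : ι × ι, (pullGossip β q.1 q.2)ᵀ * pullGossip β q.1 q.2) *ᵥ x ∧
        x ⬝ᵥ (((Fintype.card ι : K) ^ 2)⁻¹ •
            ∑ q : ι × ι, (pullGossip β q.1 q.2)ᵀ * pullGossip β q.1 q.2) *ᵥ x ≤
          ∑ i, x i ^ 2) ∧
    (∀ x : ι → K,
      ((Fintype.card ι : K) ^ 2)⁻¹ * ∑ q : ι × ι, ∑ i, (pullGossip β q.1 q.2 *ᵥ x) i ^ 2 ≤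
        ∑ i, x i ^ 2) := by
  have hcoeff : 0 ≤ 2 * β * (1 - β) := mul_nonneg (by positivity) (sub_nonneg.mpr hβ1)
  have hcard : (Fintype.card ι : K) ≠ 0 := Nat.cast_ne_zero.mpr Fintype.card_ne_zero
  simp only [← dotProduct_smul_sum_transpose_mul_self_mulVec,
    average_transpose_mul_self_pullGossip hcard, dotProduct_smul_one_add_smul_vecMulVec_one_mulVec]
  have upper (x : ι → K) :
      (1 - 2 * β * (1 - β) / Fintype.card ι) * ∑ i, x i ^ 2 +
        2 * β * (1 - β) / (Fintype.card ι : K) ^ 2 * (∑ i, x i) ^ 2 ≤ ∑ i, x i ^ 2 := by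
    linarith [div_card_sq_mul_sq_sum_le hcoeff x]
  exact ⟨fun x => ⟨le_add_of_nonneg_right (by positivity), upper x⟩, upper⟩

end OrderedField

/-- Spectral bounds for the second moment of the asynchronous pull-gossip
update matrix `D = I + β e_I (e_J − e_I)ᵀ` with `I, J` independent uniform on
`{1, …, p}` (modeled by averaging over all `p²` equally likely pairs):
`(1 − 2β(1−β)/p) ‖x‖² ≤ xᵀ E[Dᵀ D] x ≤ ‖x‖²`; in particular
`E[‖D x‖²] ≤ ‖x‖²` for every `x`. -/
theorem stmt_7 (p : ℕ) (hp : 1 ≤ p) (β : ℝ) (hβ0 : 0 < β) (hβ1 : β < 1)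
    (D : Fin p × Fin p → Matrix (Fin p) (Fin p) ℝ)
    (hD : ∀ q : Fin p × Fin p,
      D q = 1 + β • vecMulVec (Pi.single q.1 1)
        (Pi.single q.2 1 - Pi.single q.1 1)) :
    (∀ x : Fin p → ℝ,
      (1 - 2 * β * (1 - β) / p) * (∑ i, x i ^ 2) ≤
          x ⬝ᵥ (((p : ℝ) ^ 2)⁻¹ • ∑ q : Fin p × Fin p, (D q)ᵀ * D q).mulVec x ∧
        x ⬝ᵥ (((p : ℝ) ^ 2)⁻¹ • ∑ q : Fin p × Fin p, (D q)ᵀ * D q).mulVec x ≤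
          ∑ i, x i ^ 2) ∧
    (∀ x : Fin p → ℝ,
      ((p : ℝ) ^ 2)⁻¹ * ∑ q : Fin p × Fin p, ∑ i, ((D q).mulVec x i) ^ 2 ≤
        ∑ i, x i ^ 2) := by
  have : Nonempty (Fin p) := Fin.pos_iff_nonempty.mp hp
  obtain rfl : D = fun q => pullGossip β q.1 q.2 := funext hD
  simpa only [Fintype.card_fin] using stmt_7_general (ι := Fin p) hβ0.le hβ1.le
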